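/- arXiv:2412.20825 — 3 statements merged into one kernel-verified Lean document; each statement's English description precedes it below -/
import Mathlib

section
/- Let f : Λ(n)³ → ℤ satisfy the Duistermaat axioms. Then for any Lagrangian planes L₁, L₂, L₃: f(L₁,L₂,L₃) + f(L₂,L₁,L₃) = n − dim(L₁ ∩ L₂); f(L₁,L₂,L₃) + f(L₁,L₃,L₂) = n − dim(L₂ ∩ L₃); and f(L₁,L₂,L₃) + f(L₃,L₂,L₁) = n − dim(L₁ ∩ L₂) − dim(L₂ ∩ L₃) + dim(L₁ ∩ L₃). -/
/-!
Write `g(L, M) = f(L, M, L)`. The cocycle property with repeated arguments gives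
`f(L, L, M) = f(M, L, L) = 0` once `f(L, L, K) = 0` holds for a single `K`, and then expresses
each of the three sums through `g`: the first is `g(L₁, L₂)`, the second `g(L₂, L₃)`, the third
`g(L₁, L₂) + g(L₂, L₃) - g(L₁, L₃)`. So everything rests on `g(L, M) = n - dim (L ∩ M)`.

Since `g(L, M) = f(L, M, K) + f(M, L, K)` for every `K`, one may take `K` transversal to both
`L` and `M`. Such a `K` exists among the graphs of real scalars `t`, because a Lagrangian plane
contains nonzero vectors `(x, t x)` for finitely many real `t` only (`finite_nontransversal`).
A symplectic map taking `K` to `G_∞` turns `L` and `M` into graphs `G_B`, `G_C` of Hermitian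
matrices (`exists_eq_graphOf`), and shears reduce the two values of `f` to the
normalization: they are `n₋(C - B)` and `n₋(B - C)`. By Sylvester's law (`formNegIdx_eq_card`) these add
up to `rank (C - B)`, which is `n - dim (G_B ∩ G_C) = n - dim (L ∩ M)`.
-/

open Matrix

/-- The Hermitian symplectic space `ℂⁿ ⊕ ℂⁿ`. -/
abbrev SympSpace (n : ℕ) := (Fin n → ℂ) × (Fin n → ℂ)

/-- The symplectic form `ω((x₁,x₂),(y₁,y₂)) = ⟨x₁,y₂⟩ − ⟨x₂,y₁⟩`. -/
noncomputable def omegaForm {n : ℕ} (u v : SympSpace n) : ℂ :=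
  star u.1 ⬝ᵥ v.2 - star u.2 ⬝ᵥ v.1

/-- A subspace is Lagrangian iff it coincides with its symplectic complement. -/
def IsLagrangian {n : ℕ} (L : Submodule ℂ (SympSpace n)) : Prop :=
  ∀ v, v ∈ L ↔ ∀ u ∈ L, omegaForm u v = 0

/-- The Lagrangian Grassmannian `Λ(n)`. -/
abbrev LagGr (n : ℕ) := {L : Submodule ℂ (SympSpace n) // IsLagrangian L}

/-- The graph `G_M = {(x, Mx)}` of a matrix `M`. -/
noncomputable def graphOf {n : ℕ} (M : Matrix (Fin n) (Fin n) ℂ) :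
    Submodule ℂ (SympSpace n) := LinearMap.graph M.mulVecLin

/-- The vertical subspace `G_∞ = 0 ⊕ ℂⁿ`. -/
noncomputable def vertSub (n : ℕ) : Submodule ℂ (SympSpace n) :=
  (⊥ : Submodule ℂ (Fin n → ℂ)).prod (⊤ : Submodule ℂ (Fin n → ℂ))

/-- The negative index (Morse index) of a sesquilinear form: the maximal dimension of a
subspace on which it is negative definite. -/
noncomputable def formNegIdx {V : Type*} [AddCommGroup V] [Module ℂ V]
    (Q : V → V → ℂ) : ℕ :=
  sSup {d : ℕ | ∃ W : Submodule ℂ V, Module.finrank ℂ W = d ∧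
    ∀ x ∈ W, x ≠ 0 → (Q x x).re < 0}

/-- The number of negative eigenvalues (Morse index) of a Hermitian matrix, as the
maximal dimension of a subspace on which the associated form is negative definite. -/
noncomputable def negIdxM {n : ℕ} (A : Matrix (Fin n) (Fin n) ℂ) : ℕ :=
  formNegIdx (fun x y : Fin n → ℂ => star x ⬝ᵥ A.mulVec y)

/-- A symplectic transformation: a bijective linear map preserving `ω`. -/
def IsSymplecticMap {n : ℕ} (S : SympSpace n ≃ₗ[ℂ] SympSpace n) : Prop :=
  ∀ u v, omegaForm (S u) (S v) = omegaForm u v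

/-- The Duistermaat axioms for `f : Λ(n)³ → ℤ`: normalization, symplectic invariance
and the cocycle property. -/
def SatisfiesDuiAxioms {n : ℕ} (f : LagGr n → LagGr n → LagGr n → ℤ) : Prop :=
  (∀ (A : Matrix (Fin n) (Fin n) ℂ), A.IsHermitian →
    ∀ L₁ L₂ L₃ : LagGr n,
      L₁.val = graphOf (0 : Matrix (Fin n) (Fin n) ℂ) →
      L₂.val = graphOf A → L₃.val = vertSub n →
      f L₁ L₂ L₃ = negIdxM A) ∧
  (∀ S : SympSpace n ≃ₗ[ℂ] SympSpace n, IsSymplecticMap S →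
    ∀ L₁ L₂ L₃ M₁ M₂ M₃ : LagGr n,
      M₁.val = (L₁.val).map S.toLinearMap →
      M₂.val = (L₂.val).map S.toLinearMap →
      M₃.val = (L₃.val).map S.toLinearMap →
      f M₁ M₂ M₃ = f L₁ L₂ L₃) ∧
  (∀ L₁ L₂ L₃ L₄ : LagGr n,
    f L₁ L₂ L₃ - f L₁ L₂ L₄ + f L₁ L₃ L₄ - f L₂ L₃ L₄ = 0)

/-! ### The Morse index of a diagonalized form -/

/-- Sylvester's law of inertia: if the form is diagonal in the basis `b` with real
coefficients `l`, its negative index is the number of negative coefficients. -/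
lemma formNegIdx_eq_card {V : Type*} [AddCommGroup V] [Module ℂ V] {n : ℕ}
    (Q : V → V → ℂ) (b : Module.Basis (Fin n) ℂ V) (l : Fin n → ℝ)
    (hQ : ∀ x, (Q x x).re = ∑ i, l i * ‖b.repr x i‖ ^ 2) :
    formNegIdx Q = Fintype.card {i // l i < 0} := by
  classical
  have : FiniteDimensional ℂ V := b.finiteDimensional_of_finite
  have hspan : ∀ p : Fin n → Prop, ∀ x ∈ Submodule.span ℂ (b '' {i | p i}),
      ∀ i, ¬ p i → b.repr x i = 0 := by
    intro p x hx i hi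
    rw [b.mem_span_image] at hx
    by_contra hne
    exact hi (hx (by simpa using hne))
  have hdim : ∀ (p : Fin n → Prop) [DecidablePred p],
      Module.finrank ℂ (Submodule.span ℂ (b '' {i | p i})) = Fintype.card {i // p i} := by
    intro p _
    have hli : LinearIndependent ℂ (fun i : {i // p i} => b i) :=
      b.linearIndependent.comp _ Subtype.val_injective
    rw [← finrank_span_eq_card hli]
    congr 2 <;> (try rw [Set.image_eq_range]) <;> rfl
  refine IsGreatest.csSup_eq ⟨⟨Submodule.span ℂ (b '' {i | l i < 0}), hdim _, ?_⟩, ?_⟩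
  · intro x hx hx0
    rw [hQ]
    have hz := hspan _ x hx
    obtain ⟨i, hi⟩ : ∃ i, b.repr x i ≠ 0 := by
      by_contra! h
      exact hx0 (b.repr.map_eq_zero_iff.mp (Finsupp.ext h))
    refine Finset.sum_neg' (fun j _ => ?_) ⟨i, Finset.mem_univ _, ?_⟩
    · by_cases hj : l j < 0
      · exact mul_nonpos_of_nonpos_of_nonneg hj.le (by positivity)
      · simp [hz j hj]
    · have hl : l i < 0 := by
        by_contra h
        exact hi (hz i h)
      exact mul_neg_of_neg_of_pos hl (by positivity)
  · rintro d ⟨W, rfl, hW⟩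
    -- `W` meets the span of the nonnegative basis vectors trivially.
    have hdis : Disjoint W (Submodule.span ℂ (b '' {i | ¬ l i < 0})) := by
      rw [Submodule.disjoint_def]
      intro x hxW hxP
      by_contra hx0
      have h1 := hW x hxW hx0
      rw [hQ] at h1
      refine absurd h1 (not_lt.mpr (Finset.sum_nonneg fun j _ => ?_))
      by_cases hj : l j < 0
      · simp [hspan _ x hxP j (not_not.mpr hj)]
      · exact mul_nonneg (not_lt.mp hj) (by positivity)
    have h2 := Submodule.finrank_add_finrank_le_of_disjoint hdis
    rw [hdim, Module.finrank_eq_card_basis b, Fintype.card_fin] at h2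
    have h3 : Fintype.card {i // l i < 0} + Fintype.card {i // ¬ l i < 0} = n := by
      rw [Fintype.card_subtype, Fintype.card_subtype, Finset.card_filter_add_card_filter_not,
        Finset.card_univ, Fintype.card_fin]
    omega

/-- The coordinates of `x` in the eigenvector basis diagonalize the form of `A`. -/
lemma re_form_eq_sum {n : ℕ} {A : Matrix (Fin n) (Fin n) ℂ} (hA : A.IsHermitian)
    (x : Fin n → ℂ) :
    (star x ⬝ᵥ A.mulVec x).re = ∑ i, hA.eigenvalues i *
      ‖(hA.eigenvectorBasis.toBasis.map (WithLp.linearEquiv 2 ℂ (Fin n → ℂ))).repr x i‖ ^ 2 := by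
  set e := hA.eigenvectorBasis
  have h1 : star x ⬝ᵥ A.mulVec x = inner ℂ (WithLp.toLp 2 x) (WithLp.toLp 2 (A.mulVec x)) := by
    rw [EuclideanSpace.inner_eq_star_dotProduct, dotProduct_comm]
  have h2 : ∀ i, inner ℂ (e i) (WithLp.toLp 2 (A.mulVec x)) =
      hA.eigenvalues i * inner ℂ (e i) (WithLp.toLp 2 x) := by
    intro i
    have h3 : star (WithLp.ofLp (e i)) ⬝ᵥ A.mulVec x =
        star (A.mulVec (WithLp.ofLp (e i))) ⬝ᵥ x := by
      rw [star_mulVec, hA.eq, ← dotProduct_mulVec]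
    rw [EuclideanSpace.inner_eq_star_dotProduct, EuclideanSpace.inner_eq_star_dotProduct,
      dotProduct_comm, dotProduct_comm (WithLp.ofLp (WithLp.toLp 2 x)), h3,
      hA.mulVec_eigenvectorBasis i]
    rw [star_smul, smul_dotProduct]
    simp [e]
  rw [h1, ← e.sum_inner_mul_inner, Complex.re_sum]
  refine Finset.sum_congr rfl fun i _ => ?_
  have h4 : (e.toBasis.map (WithLp.linearEquiv 2 ℂ (Fin n → ℂ))).repr x i =
      inner ℂ (e i) (WithLp.toLp 2 x) := by
    simp [OrthonormalBasis.repr_apply_apply]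
  rw [h4, h2, ← inner_conj_symm, mul_left_comm, Complex.conj_mul', Complex.re_ofReal_mul]
  norm_cast

/-- `n₋(A) + n₊(A) = rank A`, where `n₊(A) = n₋(-A)`. -/
lemma negIdxM_add_negIdxM_neg {n : ℕ} {A : Matrix (Fin n) (Fin n) ℂ} (hA : A.IsHermitian) :
    negIdxM A + negIdxM (-A) = A.rank := by
  classical
  have h1 : negIdxM A = Fintype.card {i // hA.eigenvalues i < 0} :=
    formNegIdx_eq_card _ _ _ (re_form_eq_sum hA)
  have h2 : negIdxM (-A) = Fintype.card {i // - hA.eigenvalues i < 0} := by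
    refine formNegIdx_eq_card _
      (hA.eigenvectorBasis.toBasis.map (WithLp.linearEquiv 2 ℂ (Fin n → ℂ)))
      (fun i => - hA.eigenvalues i) (fun x => ?_)
    rw [neg_mulVec, dotProduct_neg, Complex.neg_re, re_form_eq_sum hA x,
      ← Finset.sum_neg_distrib]
    exact Finset.sum_congr rfl fun i _ => (neg_mul _ _).symm
  rw [h1, h2, hA.rank_eq_card_non_zero_eigs]
  simp only [Fintype.card_subtype, neg_lt_zero]
  rw [← Finset.card_union_of_disjoint, ← Finset.filter_or]
  · simp only [lt_or_lt_iff_ne]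
  · exact Finset.disjoint_filter.mpr fun i _ h1 h2 => lt_asymm h1 h2

lemma negIdxM_zero (n : ℕ) : negIdxM (0 : Matrix (Fin n) (Fin n) ℂ) = 0 := by
  have h := negIdxM_add_negIdxM_neg (A := (0 : Matrix (Fin n) (Fin n) ℂ)) isHermitian_zero
  rw [rank_zero] at h
  omega

/-! ### Lagrangian planes as graphs -/

lemma mem_graphOf {n : ℕ} {M : Matrix (Fin n) (Fin n) ℂ} {v : SympSpace n} :
    v ∈ graphOf M ↔ v.2 = M.mulVec v.1 := Iff.rfl

lemma mem_vertSub {n : ℕ} {v : SympSpace n} : v ∈ vertSub n ↔ v.1 = 0 := by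
  simp [vertSub, Submodule.mem_prod]

/-- Two vectors of `ℂⁿ` with the same pairings against all vectors agree. -/
lemma eq_of_star_dotProduct {n : ℕ} {x y : Fin n → ℂ}
    (h : ∀ u : Fin n → ℂ, star u ⬝ᵥ x = star u ⬝ᵥ y) : x = y :=
  dotProduct_eq _ _ fun u => by
    have h1 := h (star u)
    rwa [star_star, dotProduct_comm, dotProduct_comm u] at h1

lemma isLagrangian_graphOf {n : ℕ} {M : Matrix (Fin n) (Fin n) ℂ} (hM : M.IsHermitian) :
    IsLagrangian (graphOf M) := by
  have key : ∀ (u : Fin n → ℂ) (v : SympSpace n), omegaForm (u, M.mulVec u) v =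
      star u ⬝ᵥ v.2 - star u ⬝ᵥ M.mulVec v.1 := by
    intro u v
    simp only [omegaForm]
    rw [star_mulVec, hM.eq, ← dotProduct_mulVec]
  intro v
  constructor
  · rintro hv ⟨u, w⟩ hu
    rw [mem_graphOf] at hv hu
    simp only at hu
    rw [hu, key, hv, sub_self]
  · intro h
    rw [mem_graphOf]
    refine eq_of_star_dotProduct fun u => sub_eq_zero.mp ?_
    rw [← key]
    exact h _ rfl

lemma isLagrangian_vertSub (n : ℕ) : IsLagrangian (vertSub n) := by
  intro v
  constructor
  · intro hv u hu
    rw [mem_vertSub] at hv hu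
    simp [omegaForm, hv, hu]
  · intro h
    rw [mem_vertSub]
    refine eq_of_star_dotProduct fun u => ?_
    have h1 := h (0, u) (mem_vertSub.mpr rfl)
    simp only [omegaForm, star_zero, zero_dotProduct, zero_sub, neg_eq_zero] at h1
    rw [h1, dotProduct_zero]

lemma IsLagrangian.map {n : ℕ} {L : Submodule ℂ (SympSpace n)} (hL : IsLagrangian L)
    {S : SympSpace n ≃ₗ[ℂ] SympSpace n} (hS : IsSymplecticMap S) :
    IsLagrangian (L.map S.toLinearMap) := by
  intro v
  obtain ⟨w, rfl⟩ := S.surjective v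
  have h1 : S w ∈ L.map S.toLinearMap ↔ w ∈ L := by
    simp
  rw [h1, hL w]
  constructor
  · rintro h _ ⟨u, hu, rfl⟩
    exact (hS u w).trans (h u hu)
  · intro h u hu
    rw [← hS u w]
    exact h _ ⟨u, hu, rfl⟩

/-- A Lagrangian plane transversal to the vertical one is the graph of a Hermitian matrix:
a functional vanishing on the projection of `L` to the first factor is represented by a
vertical vector in `L^ω = L`, so this projection is onto. -/
lemma exists_eq_graphOf {n : ℕ} {L : Submodule ℂ (SympSpace n)} (hL : IsLagrangian L)
    (htr : ∀ y : Fin n → ℂ, ((0, y) : SympSpace n) ∈ L → y = 0) :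
    ∃ M : Matrix (Fin n) (Fin n) ℂ, M.IsHermitian ∧ L = graphOf M := by
  have hsurj : ∀ x : Fin n → ℂ, ∃ y, ((x, y) : SympSpace n) ∈ L := by
    have htop : L.map (LinearMap.fst ℂ (Fin n → ℂ) (Fin n → ℂ)) = ⊤ := by
      by_contra hne
      obtain ⟨φ, hφ0, hφ⟩ := Submodule.exists_le_ker_of_lt_top _ (lt_top_iff_ne_top.mpr hne)
      have hrep : ∀ x, φ x = x ⬝ᵥ (fun i => φ (Pi.single i 1)) := by
        intro x
        conv_lhs => rw [LinearMap.pi_apply_eq_sum_univ φ x]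
        simp only [dotProduct, smul_eq_mul]
        refine Finset.sum_congr rfl fun i _ => ?_
        congr 2
        ext j
        simp [Pi.single_apply, eq_comm]
      set w : Fin n → ℂ := fun i => φ (Pi.single i 1) with hw
      have h0 : star w = 0 := by
        refine htr _ ((hL _).mpr fun u hu => ?_)
        have h1 : u.1 ⬝ᵥ w = 0 := by
          rw [← hrep]
          exact hφ ⟨u, hu, rfl⟩
        simp only [omegaForm, dotProduct_zero, sub_zero]
        rw [star_dotProduct_star, dotProduct_comm, h1, star_zero]
      have hw0 : w = 0 := star_eq_zero.mp h0
      exact hφ0 (LinearMap.ext fun x => by rw [hrep, hw0]; simp)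
    intro x
    have hx : x ∈ L.map (LinearMap.fst ℂ (Fin n → ℂ) (Fin n → ℂ)) := htop ▸ Submodule.mem_top
    obtain ⟨⟨a, y⟩, hy, rfl⟩ := hx
    exact ⟨y, hy⟩
  choose g hg using hsurj
  have huniq : ∀ x y, ((x, y) : SympSpace n) ∈ L → y = g x := by
    intro x y h
    have h1 := L.sub_mem h (hg x)
    rw [Prod.mk_sub_mk, sub_self] at h1
    exact sub_eq_zero.mp (htr _ h1)
  let T : (Fin n → ℂ) →ₗ[ℂ] (Fin n → ℂ) :=
    { toFun := g
      map_add' := fun x y => (huniq _ _ (L.add_mem (hg x) (hg y))).symm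
      map_smul' := fun c x => (huniq _ _ (L.smul_mem c (hg x))).symm }
  have hT : ∀ x, (LinearMap.toMatrix' T).mulVec x = g x := fun x => by
    rw [LinearMap.toMatrix'_mulVec]
    rfl
  refine ⟨LinearMap.toMatrix' T, ?_, ?_⟩
  · have hsym : ∀ x y, star x ⬝ᵥ (LinearMap.toMatrix' T).mulVec y =
        star ((LinearMap.toMatrix' T).mulVec x) ⬝ᵥ y := by
      intro x y
      rw [hT, hT]
      exact sub_eq_zero.mp ((hL _).mp (hg y) _ (hg x))
    refine Matrix.mulVec_injective (funext fun y => eq_of_star_dotProduct fun u => ?_)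
    rw [hsym u y, star_mulVec, ← dotProduct_mulVec]
  · ext ⟨x, y⟩
    rw [mem_graphOf, hT]
    exact ⟨huniq x y, fun h => by simp only at h; rw [h]; exact hg x⟩

/-! ### A common transversal plane -/

/-- A Lagrangian plane meets all but finitely many of the planes `G_{t·1}`, `t` real,
trivially: vectors `(x, t x)`, `(y, s y)` of `L` with `s ≠ t` satisfy `⟨x, y⟩ = 0`. -/
lemma finite_nontransversal {n : ℕ} {L : Submodule ℂ (SympSpace n)} (hL : IsLagrangian L) :
    {t : ℝ | ∃ x : Fin n → ℂ, x ≠ 0 ∧ ((x, (t : ℂ) • x) : SympSpace n) ∈ L}.Finite := by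
  set T := {t : ℝ | ∃ x : Fin n → ℂ, x ≠ 0 ∧ ((x, (t : ℂ) • x) : SympSpace n) ∈ L}
  choose g hg0 hg using fun t : T => t.2
  have hli : LinearIndependent ℂ (fun t : T => WithLp.toLp 2 (g t)) := by
    refine linearIndependent_of_ne_zero_of_inner_eq_zero (𝕜 := ℂ) (fun t h => hg0 t ?_) ?_
    · simpa using h
    · intro s t hst
      have h1 := (hL _).mp (hg t) _ (hg s)
      have hne : ((t : ℝ) : ℂ) - ((s : ℝ) : ℂ) ≠ 0 := by
        rw [sub_ne_zero]
        exact fun h => hst (Subtype.ext (Complex.ofReal_injective h).symm)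
      simp only [omegaForm, star_smul, dotProduct_smul, smul_dotProduct, smul_eq_mul] at h1
      rw [show star (((s : ℝ) : ℂ)) = ((s : ℝ) : ℂ) from Complex.conj_ofReal _, ← sub_mul] at h1
      rw [EuclideanSpace.inner_eq_star_dotProduct, dotProduct_comm]
      exact (mul_eq_zero.mp h1).resolve_left hne
  have := hli.finite
  exact Set.toFinite T

/-- The symplectic map `(x₁, x₂) ↦ (t x₁ - x₂, x₁)`, which takes `G_{t·1}` to `G_∞`. -/
noncomputable def toVert (n : ℕ) (t : ℝ) : SympSpace n ≃ₗ[ℂ] SympSpace n where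
  toFun v := ((t : ℂ) • v.1 - v.2, v.1)
  map_add' u v := by ext <;> simp; ring
  map_smul' c v := by ext <;> simp; ring
  invFun v := (v.2, (t : ℂ) • v.2 - v.1)
  left_inv v := by ext <;> simp
  right_inv v := by ext <;> simp

lemma isSymplecticMap_toVert (n : ℕ) (t : ℝ) : IsSymplecticMap (toVert n t) := by
  intro u v
  simp only [toVert, omegaForm, LinearEquiv.coe_mk, LinearMap.coe_mk, AddHom.coe_mk, star_sub,
    star_smul, sub_dotProduct, dotProduct_sub, dotProduct_smul, smul_dotProduct, smul_eq_mul]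
  rw [show star (t : ℂ) = (t : ℂ) from Complex.conj_ofReal _]
  ring

/-- The shear `(x₁, x₂) ↦ (x₁, x₂ - B x₁)`, which fixes `G_∞` and takes `G_C` to `G_{C-B}`. -/
noncomputable def shear {n : ℕ} (B : Matrix (Fin n) (Fin n) ℂ) :
    SympSpace n ≃ₗ[ℂ] SympSpace n where
  toFun v := (v.1, v.2 - B.mulVec v.1)
  map_add' u v := by
    simp only [Prod.fst_add, Prod.snd_add, mulVec_add, Prod.mk_add_mk]
    congr 1
    abel
  map_smul' c v := by
    simp [mulVec_smul, smul_sub]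
  invFun v := (v.1, v.2 + B.mulVec v.1)
  left_inv v := by simp
  right_inv v := by simp

lemma isSymplecticMap_shear {n : ℕ} {B : Matrix (Fin n) (Fin n) ℂ} (hB : B.IsHermitian) :
    IsSymplecticMap (shear B) := by
  intro u v
  simp only [shear, omegaForm, LinearEquiv.coe_mk, LinearMap.coe_mk, AddHom.coe_mk, star_sub,
    sub_dotProduct, dotProduct_sub]
  rw [star_mulVec, hB.eq, ← dotProduct_mulVec]
  ring

lemma map_shear_graphOf {n : ℕ} (B C : Matrix (Fin n) (Fin n) ℂ) :
    (graphOf C).map (shear B).toLinearMap = graphOf (C - B) := by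
  ext v
  rw [Submodule.mem_map_equiv, mem_graphOf, mem_graphOf, sub_mulVec]
  exact eq_sub_iff_add_eq.symm

lemma map_shear_vertSub {n : ℕ} (B : Matrix (Fin n) (Fin n) ℂ) :
    (vertSub n).map (shear B).toLinearMap = vertSub n := by
  ext v
  rw [Submodule.mem_map_equiv, mem_vertSub, mem_vertSub]
  exact Iff.rfl

/-- The intersection of two graphs is `{(x, Bx) : (C - B) x = 0}`. -/
lemma finrank_graphOf_inf {n : ℕ} (B C : Matrix (Fin n) (Fin n) ℂ) :
    (Module.finrank ℂ ↥(graphOf B ⊓ graphOf C) : ℤ) = n - (C - B).rank := by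
  let ι : (Fin n → ℂ) →ₗ[ℂ] SympSpace n := LinearMap.id.prod B.mulVecLin
  have hι : Function.Injective ι := fun x y h => congrArg Prod.fst h
  have heq : graphOf B ⊓ graphOf C = (LinearMap.ker (C - B).mulVecLin).map ι := by
    ext v
    rw [Submodule.mem_inf, mem_graphOf, mem_graphOf]
    constructor
    · rintro ⟨h1, h2⟩
      refine ⟨v.1, ?_, Prod.ext rfl h1.symm⟩
      simp [← h1, ← h2]
    · rintro ⟨x, hx, rfl⟩
      simp only [SetLike.mem_coe, LinearMap.mem_ker, mulVecLin_apply, sub_mulVec,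
        sub_eq_zero] at hx
      exact ⟨rfl, hx.symm⟩
  have h1 := LinearMap.finrank_range_add_finrank_ker (C - B).mulVecLin
  rw [Module.finrank_fin_fun] at h1
  rw [heq, ← (Submodule.equivMapOfInjective ι hι _).finrank_eq, Matrix.rank]
  omega

/-- For any two Lagrangian planes some symplectic map makes both of them graphs of
Hermitian matrices. -/
lemma exists_symplectic_graphs {n : ℕ} (L₁ L₂ : LagGr n) :
    ∃ S : SympSpace n ≃ₗ[ℂ] SympSpace n, IsSymplecticMap S ∧
      ∃ B C : Matrix (Fin n) (Fin n) ℂ, B.IsHermitian ∧ C.IsHermitian ∧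
        L₁.val.map S.toLinearMap = graphOf B ∧ L₂.val.map S.toLinearMap = graphOf C := by
  obtain ⟨t, ht⟩ := ((finite_nontransversal L₁.2).union
    (finite_nontransversal L₂.2)).infinite_compl.nonempty
  rw [Set.mem_compl_iff, Set.mem_union, not_or] at ht
  have key : ∀ L : LagGr n,
      t ∉ {t : ℝ | ∃ x : Fin n → ℂ, x ≠ 0 ∧ ((x, (t : ℂ) • x) : SympSpace n) ∈ L.val} →
      ∃ B : Matrix (Fin n) (Fin n) ℂ, B.IsHermitian ∧
        L.val.map (toVert n t).toLinearMap = graphOf B := by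
    intro L hL
    refine exists_eq_graphOf (L.2.map (isSymplecticMap_toVert n t)) fun y hy => ?_
    rw [Submodule.mem_map_equiv] at hy
    by_contra hne
    refine hL ⟨y, hne, ?_⟩
    have h1 : (toVert n t).symm (0, y) = (y, (t : ℂ) • y) := by
      change (y, (t : ℂ) • y - 0) = _
      rw [sub_zero]
    rwa [h1] at hy
  obtain ⟨B, hB, hBg⟩ := key L₁ ht.1
  obtain ⟨C, hC, hCg⟩ := key L₂ ht.2
  exact ⟨_, isSymplecticMap_toVert n t, B, C, hB, hC, hBg, hCg⟩

/-! ### Consequences of the axioms -/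

section Consequences

variable {n : ℕ} {f : LagGr n → LagGr n → LagGr n → ℤ}

/-- Shearing by `B` reduces `f(G_B, G_C, G_∞)` to the normalization axiom. -/
lemma SatisfiesDuiAxioms.graph_graph_vert (hf : SatisfiesDuiAxioms f)
    {B C : Matrix (Fin n) (Fin n) ℂ} (hB : B.IsHermitian) (hC : C.IsHermitian)
    {M₁ M₂ M₃ : LagGr n} (h₁ : M₁.val = graphOf B) (h₂ : M₂.val = graphOf C)
    (h₃ : M₃.val = vertSub n) : f M₁ M₂ M₃ = negIdxM (C - B) := by
  rw [← hf.1 (C - B) (hC.sub hB) ⟨_, isLagrangian_graphOf isHermitian_zero⟩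
    ⟨_, isLagrangian_graphOf (hC.sub hB)⟩ ⟨_, isLagrangian_vertSub n⟩ rfl rfl rfl]
  refine (hf.2.1 (shear B) (isSymplecticMap_shear hB) _ _ _ _ _ _ ?_ ?_ ?_).symm
  · rw [h₁, map_shear_graphOf, sub_self]
  · rw [h₂, map_shear_graphOf]
  · rw [h₃, map_shear_vertSub]

/-- With a third plane transversal to `L₁` and `L₂`, the swap formula for the first two
arguments is `n₋(C - B) + n₋(B - C) = rank (C - B)`. -/
lemma SatisfiesDuiAxioms.exists_swap (hf : SatisfiesDuiAxioms f) (L₁ L₂ : LagGr n) :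
    ∃ K : LagGr n, f L₁ L₁ K = 0 ∧
      f L₁ L₂ K + f L₂ L₁ K = (n : ℤ) - Module.finrank ℂ ↥(L₁.val ⊓ L₂.val) := by
  obtain ⟨S, hS, B, C, hB, hC, h₁, h₂⟩ := exists_symplectic_graphs L₁ L₂
  have hS' : IsSymplecticMap S.symm := fun u v => by
    rw [← hS, S.apply_symm_apply, S.apply_symm_apply]
  let K : LagGr n := ⟨_, (isLagrangian_vertSub n).map hS'⟩
  let V : LagGr n := ⟨_, isLagrangian_vertSub n⟩
  have hK : V.val = K.val.map S.toLinearMap := by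
    ext v
    simp [K, V, Submodule.mem_map_equiv]
  let M₁ : LagGr n := ⟨_, L₁.2.map hS⟩
  let M₂ : LagGr n := ⟨_, L₂.2.map hS⟩
  have e11 := hf.2.1 S hS L₁ L₁ K M₁ M₁ V rfl rfl hK
  have e12 := hf.2.1 S hS L₁ L₂ K M₁ M₂ V rfl rfl hK
  have e21 := hf.2.1 S hS L₂ L₁ K M₂ M₁ V rfl rfl hK
  rw [hf.graph_graph_vert hB hB h₁ h₁ rfl] at e11
  rw [hf.graph_graph_vert hB hC h₁ h₂ rfl] at e12
  rw [hf.graph_graph_vert hC hB h₂ h₁ rfl] at e21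
  have hdim : Module.finrank ℂ ↥(L₁.val ⊓ L₂.val) =
      Module.finrank ℂ ↥(graphOf B ⊓ graphOf C) := by
    rw [← h₁, ← h₂, ← Submodule.map_inf _ S.injective]
    exact (S.finrank_map_eq _).symm
  refine ⟨K, ?_, ?_⟩
  · rw [← e11, sub_self, negIdxM_zero, Nat.cast_zero]
  · have hr := negIdxM_add_negIdxM_neg (hC.sub hB)
    rw [neg_sub] at hr
    rw [← e12, ← e21, hdim, finrank_graphOf_inf, ← hr]
    push_cast
    ring

lemma SatisfiesDuiAxioms.self_left (hf : SatisfiesDuiAxioms f) (L M : LagGr n) :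
    f L L M = 0 := by
  obtain ⟨K, hK, -⟩ := hf.exists_swap L L
  have h := hf.2.2 L L M K
  linarith

lemma SatisfiesDuiAxioms.self_right (hf : SatisfiesDuiAxioms f) (L M : LagGr n) :
    f M L L = 0 := by
  have h := hf.2.2 M L L L
  have h' := hf.self_left L L
  linarith

/-- The value at a repeated outer argument is `f(L, M, K) + f(M, L, K)` for every `K`, hence
computable from a transversal `K`. -/
lemma SatisfiesDuiAxioms.outer_eq (hf : SatisfiesDuiAxioms f) (L M : LagGr n) :
    f L M L = (n : ℤ) - Module.finrank ℂ ↥(L.val ⊓ M.val) := by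
  obtain ⟨K, -, hK⟩ := hf.exists_swap L M
  have h := hf.2.2 L M L K
  have h' := hf.self_left L K
  linarith

end Consequences

/-- Permuting the arguments of the Duistermaat index. -/
theorem duistermaat_index_swap (n : ℕ) (hn : 1 ≤ n)
    (f : LagGr n → LagGr n → LagGr n → ℤ) (hf : SatisfiesDuiAxioms f)
    (L₁ L₂ L₃ : LagGr n) :
    f L₁ L₂ L₃ + f L₂ L₁ L₃ = (n : ℤ) - Module.finrank ℂ ↥(L₁.val ⊓ L₂.val) ∧
    f L₁ L₂ L₃ + f L₁ L₃ L₂ = (n : ℤ) - Module.finrank ℂ ↥(L₂.val ⊓ L₃.val) ∧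
    f L₁ L₂ L₃ + f L₃ L₂ L₁ = (n : ℤ) - Module.finrank ℂ ↥(L₁.val ⊓ L₂.val)
      - Module.finrank ℂ ↥(L₂.val ⊓ L₃.val) + Module.finrank ℂ ↥(L₁.val ⊓ L₃.val) := by
  have s12 := hf.outer_eq L₁ L₂
  have s13 := hf.outer_eq L₁ L₃
  have s23 := hf.outer_eq L₂ L₃
  have c1 := hf.2.2 L₁ L₂ L₁ L₃
  have c2 := hf.2.2 L₁ L₂ L₃ L₂
  have c3 := hf.2.2 L₁ L₂ L₃ L₁
  have c4 := hf.2.2 L₂ L₃ L₂ L₁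
  have z1 := hf.self_left L₁ L₃
  have z2 := hf.self_right L₂ L₁
  have z3 := hf.self_left L₂ L₁
  refine ⟨by linarith, by linarith, by linarith⟩
end

section
/- Let f : Λ(n)³ → ℤ satisfy the Duistermaat axioms, and let A be a bijective linear map on ℂ^n ⊕ ℂ^n that is anti-symplectic, i.e., ω(Au, Av) = −ω(u,v) for all u, v. Then for any Lagrangian planes L₁, L₂, L₃ (whose images under A are again Lagrangian): f(AL₁, AL₂, AL₃) = f(L₃, L₂, L₁). -/
/-!
The key fact is that the identity holds for triples whose third plane is transverse to the other
two: if `L₁` and `L₂` are complementary to a Lagrangian plane `M`, and `π₁`, `π₂` are the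
projections onto `L₁`, `L₂` along `M`, then `R = π₁ + π₂ - 1` is an anti-symplectic involution
which exchanges `L₁` and `L₂` and preserves `M` (`swapMap`). For an anti-symplectic `A` the
composite `A ∘ R` is symplectic and carries `(L₂, L₁, M)` to `(AL₁, AL₂, AM)`, so symplectic
invariance gives `f(AL₁, AL₂, AM) = f(L₂, L₁, M)` (`index_swap`).

The general case follows by applying the cocycle property to `(AL₁, AL₂, AL₃, AM)` and to
`(L₃, L₂, L₁, M)`, where `M` is a common Lagrangian complement of `L₁`, `L₂`, `L₃`. Such an `M`
is found among the graphs of real scalars `{(x, t x)}`: if `(x, t x)` and `(y, s y)` lie in a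
Lagrangian plane, then `(s - t)⟨x, y⟩ = 0`, so each plane meets nontrivially at most `n` of these
graphs.
-/

open Matrix

/-! ### The symplectic form -/

section Aux

variable {n : ℕ}

lemma omegaForm_add_left (u u' v : SympSpace n) :
    omegaForm (u + u') v = omegaForm u v + omegaForm u' v := by
  simp only [omegaForm, Prod.fst_add, Prod.snd_add, star_add, add_dotProduct]; ring

lemma omegaForm_add_right (u v v' : SympSpace n) :
    omegaForm u (v + v') = omegaForm u v + omegaForm u v' := by
  simp only [omegaForm, Prod.fst_add, Prod.snd_add, dotProduct_add]; ring

lemma omegaForm_neg_left (u v : SympSpace n) : omegaForm (-u) v = -omegaForm u v := by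
  simp only [omegaForm, Prod.fst_neg, Prod.snd_neg, star_neg, neg_dotProduct]; ring

lemma omegaForm_neg_right (u v : SympSpace n) : omegaForm u (-v) = -omegaForm u v := by
  simp only [omegaForm, Prod.fst_neg, Prod.snd_neg, dotProduct_neg]; ring

lemma omegaForm_swap (u v : SympSpace n) : omegaForm u v = -star (omegaForm v u) := by
  rw [omegaForm, omegaForm, star_sub, ← star_dotProduct, ← star_dotProduct]; ring

lemma IsLagrangian.map_anti {L : Submodule ℂ (SympSpace n)} (hL : IsLagrangian L)
    (A : SympSpace n ≃ₗ[ℂ] SympSpace n)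
    (hA : ∀ u v, omegaForm (A u) (A v) = -omegaForm u v) :
    IsLagrangian (L.map A.toLinearMap) := by
  intro v
  obtain ⟨w, rfl⟩ := A.surjective v
  have h : A w ∈ L.map A.toLinearMap ↔ w ∈ L := by simp
  rw [h, hL w]
  constructor
  · rintro hw _ ⟨u, hu, rfl⟩
    exact (hA u w).trans (by rw [hw u hu, neg_zero])
  · intro hw u hu
    exact neg_eq_zero.1 ((hA u w).symm.trans (hw _ (Submodule.mem_map_of_mem hu)))

/-! ### Existence of a common Lagrangian complement -/

/-- The graph `{(x, t x)}` of the real scalar `t`. -/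
def scalarGraph (n : ℕ) (t : ℝ) : Submodule ℂ (SympSpace n) where
  carrier := {v | v.2 = (t : ℂ) • v.1}
  add_mem' := by
    intro a b ha hb
    simp only [Set.mem_ofPred_eq, Prod.fst_add, Prod.snd_add, smul_add] at *
    rw [ha, hb]
  zero_mem' := by simp
  smul_mem' := by
    intro c a ha
    simp only [Set.mem_ofPred_eq, Prod.smul_fst, Prod.smul_snd] at *
    rw [ha, smul_comm]

lemma mem_scalarGraph {t : ℝ} {v : SympSpace n} :
    v ∈ scalarGraph n t ↔ v.2 = (t : ℂ) • v.1 := Iff.rfl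

lemma omegaForm_scalar_left (t : ℝ) (x : Fin n → ℂ) (v : SympSpace n) :
    omegaForm (x, (t : ℂ) • x) v = star x ⬝ᵥ (v.2 - (t : ℂ) • v.1) := by
  simp [omegaForm, dotProduct_sub, dotProduct_smul, star_smul, smul_dotProduct]

open scoped ComplexOrder in
lemma scalarGraph_isLagrangian (t : ℝ) : IsLagrangian (scalarGraph n t) := by
  intro v
  constructor
  · rintro hv ⟨x, y⟩ hu
    obtain rfl : y = (t : ℂ) • x := hu
    rw [omegaForm_scalar_left, mem_scalarGraph.1 hv, sub_self, dotProduct_zero]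
  · intro h
    have h0 := h (v.2 - (t : ℂ) • v.1, (t : ℂ) • (v.2 - (t : ℂ) • v.1)) rfl
    rw [omegaForm_scalar_left, dotProduct_star_self_eq_zero] at h0
    exact sub_eq_zero.1 h0

/-- The nonzero vectors `x` with `(x, t x) ∈ L` are mutually orthogonal for distinct `t`, so there
are only finitely many such `t`. -/
lemma finite_bad {L : Submodule ℂ (SympSpace n)} (hL : IsLagrangian L) :
    {t : ℝ | ∃ x : Fin n → ℂ, x ≠ 0 ∧ (x, (t : ℂ) • x) ∈ L}.Finite := by
  set B := {t : ℝ | ∃ x : Fin n → ℂ, x ≠ 0 ∧ (x, (t : ℂ) • x) ∈ L}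
  have hB : ∀ t : B, ∃ x : Fin n → ℂ, x ≠ 0 ∧ (x, ((t : ℝ) : ℂ) • x) ∈ L := fun t => t.2
  choose x hx0 hxL using hB
  have hli : LinearIndependent ℂ (fun t : B => WithLp.toLp 2 (x t)) := by
    refine linearIndependent_of_ne_zero_of_inner_eq_zero (fun t => ?_) (fun t s hts => ?_)
    · simpa using hx0 t
    · have h := (hL _).1 (hxL s) _ (hxL t)
      rw [omegaForm_scalar_left] at h
      simp only [← sub_smul, dotProduct_smul, smul_eq_mul, mul_eq_zero] at h
      beta_reduce
      rw [EuclideanSpace.inner_eq_star_dotProduct, dotProduct_comm]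
      refine h.resolve_left fun h0 => hts ?_
      exact (Subtype.ext (by exact_mod_cast sub_eq_zero.1 h0)).symm
  exact Set.finite_coe_iff.1 hli.finite_of_isNoetherian

/-- For Lagrangian `L`, a vector orthogonal to the image of `L` under `(x, y) ↦ y - t x` yields an
element of `L` in the graph of `t`; so trivial intersection already forces complementarity. -/
lemma isCompl_scalarGraph {L : Submodule ℂ (SympSpace n)} (hL : IsLagrangian L) {t : ℝ}
    (ht : ¬ ∃ x : Fin n → ℂ, x ≠ 0 ∧ (x, (t : ℂ) • x) ∈ L) :
    IsCompl L (scalarGraph n t) := by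
  set φ : SympSpace n →ₗ[ℂ] (Fin n → ℂ) :=
    LinearMap.snd ℂ _ _ - (t : ℂ) • LinearMap.fst ℂ _ _ with hφ
  have hφv : ∀ v, φ v = v.2 - (t : ℂ) • v.1 := fun v => rfl
  have htop : L.map φ = ⊤ := by
    by_contra hne
    obtain ⟨g, hg0, hg⟩ := Submodule.exists_le_ker_of_lt_top _ (lt_top_iff_ne_top.2 hne)
    obtain ⟨z, hz⟩ : ∃ z : Fin n → ℂ, ∀ v, g v = star z ⬝ᵥ v := by
      refine ⟨fun i => star (g (Pi.single i 1)), fun v => ?_⟩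
      rw [LinearMap.pi_apply_eq_sum_univ g v]
      simp [dotProduct, mul_comm, ← Pi.single_apply, Pi.single_comm]
    refine ht ⟨z, ?_, (hL _).2 fun u hu => ?_⟩
    · rintro rfl
      exact hg0 (LinearMap.ext fun v => by simp [hz])
    · have := hg (Submodule.mem_map_of_mem hu)
      rw [LinearMap.mem_ker, hz, hφv] at this
      rw [omegaForm_swap, omegaForm_scalar_left, this, star_zero, neg_zero]
  constructor
  · rw [Submodule.disjoint_def]
    rintro ⟨x, y⟩ hxL hy
    obtain rfl : y = (t : ℂ) • x := hy
    by_contra h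
    exact ht ⟨x, fun hx => h (by simp [hx]), hxL⟩
  · rw [codisjoint_iff, eq_top_iff]
    intro v _
    obtain ⟨l, hl, hlv⟩ : φ v ∈ L.map φ := htop ▸ Submodule.mem_top
    refine Submodule.mem_sup.2 ⟨l, hl, v - l, ?_, add_sub_cancel _ _⟩
    have : φ (v - l) = 0 := by rw [map_sub, hlv, sub_self]
    rw [hφv] at this
    exact sub_eq_zero.1 this

lemma exists_common_compl (L₁ L₂ L₃ : LagGr n) :
    ∃ M : LagGr n, IsCompl L₁.val M.val ∧ IsCompl L₂.val M.val ∧ IsCompl L₃.val M.val := by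
  obtain ⟨t, ht⟩ :=
    (((finite_bad L₁.2).union (finite_bad L₂.2)).union (finite_bad L₃.2)).exists_notMem
  simp only [Set.mem_union, not_or] at ht
  exact ⟨⟨scalarGraph n t, scalarGraph_isLagrangian t⟩, isCompl_scalarGraph L₁.2 ht.1.1,
    isCompl_scalarGraph L₂.2 ht.1.2, isCompl_scalarGraph L₃.2 ht.2⟩

/-! ### The anti-symplectic exchange of two planes -/

/-- The map `R = π₁ + π₂ - 1`, where `πᵢ` is the projection onto `Lᵢ` along the common
complement `M`. It exchanges `L₁` and `L₂` and is `-1` on `M`. -/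
noncomputable def swapMap {L₁ L₂ M : Submodule ℂ (SympSpace n)} (h₁ : IsCompl L₁ M)
    (h₂ : IsCompl L₂ M) : SympSpace n →ₗ[ℂ] SympSpace n :=
  L₁.projection M h₁ + L₂.projection M h₂ - LinearMap.id

lemma swapMap_comm {L₁ L₂ M : Submodule ℂ (SympSpace n)} (h₁ : IsCompl L₁ M)
    (h₂ : IsCompl L₂ M) : swapMap h₁ h₂ = swapMap h₂ h₁ := by
  rw [swapMap, swapMap, add_comm]

lemma swapMap_right {L₁ L₂ M : Submodule ℂ (SympSpace n)} (h₁ : IsCompl L₁ M)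
    (h₂ : IsCompl L₂ M) {m : SympSpace n} (hm : m ∈ M) : swapMap h₁ h₂ m = -m := by
  simp [swapMap, (Submodule.projection_apply_eq_zero_iff h₁).2 hm,
    (Submodule.projection_apply_eq_zero_iff h₂).2 hm]

lemma swapMap_left {L₁ L₂ M : Submodule ℂ (SympSpace n)} (h₁ : IsCompl L₁ M)
    (h₂ : IsCompl L₂ M) {l : SympSpace n} (hl : l ∈ L₁) :
    swapMap h₁ h₂ l = L₂.projection M h₂ l := by
  simp [swapMap, Submodule.projection_apply_of_mem_left h₁ hl]

lemma sub_projection_mem {L M : Submodule ℂ (SympSpace n)} (h : IsCompl L M) (v : SympSpace n) :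
    v - L.projection M h v ∈ M := by
  rw [← Submodule.projection_apply_eq_zero_iff h, map_sub,
    Submodule.projection_apply_of_mem_left h (Submodule.projection_apply_mem h v), sub_self]

lemma swapMap_involutive {L₁ L₂ M : Submodule ℂ (SympSpace n)} (h₁ : IsCompl L₁ M)
    (h₂ : IsCompl L₂ M) : Function.Involutive (swapMap h₁ h₂) := by
  have hl : ∀ l ∈ L₁, swapMap h₁ h₂ (swapMap h₁ h₂ l) = l := by
    intro l hl
    rw [swapMap_left h₁ h₂ hl, swapMap_comm,
      swapMap_left h₂ h₁ (Submodule.projection_apply_mem h₂ l)]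
    have h := (Submodule.projection_apply_eq_zero_iff h₁).2 (sub_projection_mem h₂ l)
    rw [map_sub, Submodule.projection_apply_of_mem_left h₁ hl, sub_eq_zero] at h
    exact h.symm
  intro v
  have hm := sub_projection_mem h₁ v
  have h' : swapMap h₁ h₂ (swapMap h₁ h₂ (v - L₁.projection M h₁ v))
      = v - L₁.projection M h₁ v := by
    rw [swapMap_right h₁ h₂ hm, map_neg, swapMap_right h₁ h₂ hm, neg_neg]
  rw [map_sub, map_sub, hl _ (Submodule.projection_apply_mem h₁ v)] at h'
  exact sub_left_injective h'

/-- Write `u = l + m`, `v = l' + m'` along `L₁ ⊕ M`. Then `R u = π₂ l - m` with `π₂ l - l ∈ M`,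
and only the cross terms of `ω` survive, with opposite sign. -/
lemma swapMap_anti {L₁ L₂ M : Submodule ℂ (SympSpace n)} (hL₁ : IsLagrangian L₁)
    (hL₂ : IsLagrangian L₂) (hM : IsLagrangian M) (h₁ : IsCompl L₁ M)
    (h₂ : IsCompl L₂ M) (u v : SympSpace n) :
    omegaForm (swapMap h₁ h₂ u) (swapMap h₁ h₂ v) = -omegaForm u v := by
  have key : ∀ u : SympSpace n, ∃ l ∈ L₁, ∃ l₂ ∈ L₂, ∃ m ∈ M, ∃ k ∈ M,
      l = l₂ + k ∧ u = l + m ∧ swapMap h₁ h₂ u = l₂ + -m := by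
    intro u
    have hp := Submodule.projection_apply_mem h₁ u
    refine ⟨_, hp, _, Submodule.projection_apply_mem h₂ (L₁.projection M h₁ u), _,
      sub_projection_mem h₁ u, _, sub_projection_mem h₂ (L₁.projection M h₁ u),
      (add_sub_cancel _ _).symm, (add_sub_cancel _ _).symm, ?_⟩
    rw [← swapMap_left h₁ h₂ hp, ← swapMap_right h₁ h₂ (sub_projection_mem h₁ u), ← map_add,
      add_sub_cancel]
  obtain ⟨l, hl, l₂, hl₂, m, hm, k, hk, e, eu, eR⟩ := key u
  obtain ⟨l', hl', l₂', hl₂', m', hm', k', hk', e', ev, eR'⟩ := key v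
  have a1 := (hL₁ _).1 hl' _ hl
  have a2 := (hL₂ _).1 hl₂' _ hl₂
  have a3 := (hM _).1 hm' _ hm
  have a4 := (hM _).1 hm' _ hk
  have a5 := (hM _).1 hk' _ hm
  have b1 : omegaForm l m' = omegaForm l₂ m' := by rw [e, omegaForm_add_left, a4, add_zero]
  have b2 : omegaForm m l' = omegaForm m l₂' := by rw [e', omegaForm_add_right, a5, add_zero]
  rw [eR, eR', eu, ev]
  simp only [omegaForm_add_left, omegaForm_add_right, omegaForm_neg_left, omegaForm_neg_right,
    a1, a2, a3, b1, b2]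
  ring

lemma swapMap_map_left {L₁ L₂ M : Submodule ℂ (SympSpace n)} (h₁ : IsCompl L₁ M)
    (h₂ : IsCompl L₂ M) : L₁.map (swapMap h₁ h₂) = L₂ := by
  apply le_antisymm
  · rintro _ ⟨l, hl, rfl⟩
    rw [swapMap_left h₁ h₂ hl]
    exact Submodule.projection_apply_mem h₂ l
  · intro l hl
    refine ⟨swapMap h₁ h₂ l, ?_, swapMap_involutive h₁ h₂ l⟩
    rw [swapMap_comm, swapMap_left h₂ h₁ hl]
    exact Submodule.projection_apply_mem h₁ l

lemma swapMap_map_right {L₁ L₂ M : Submodule ℂ (SympSpace n)} (h₁ : IsCompl L₁ M)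
    (h₂ : IsCompl L₂ M) : M.map (swapMap h₁ h₂) = M := by
  apply le_antisymm
  · rintro _ ⟨m, hm, rfl⟩
    rw [swapMap_right h₁ h₂ hm]
    exact M.neg_mem hm
  · intro m hm
    refine ⟨-m, M.neg_mem hm, ?_⟩
    rw [swapMap_right h₁ h₂ (M.neg_mem hm), neg_neg]

/-- When `M` is transverse to `L₁` and `L₂`, an anti-symplectic map acts on the index of
`(L₁, L₂, M)` by exchanging the first two arguments: `A ∘ R` is symplectic. -/
lemma index_swap {f : LagGr n → LagGr n → LagGr n → ℤ} (hf : SatisfiesDuiAxioms f)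
    (A : SympSpace n ≃ₗ[ℂ] SympSpace n)
    (hA : ∀ u v, omegaForm (A u) (A v) = -omegaForm u v)
    {L₁ L₂ M N₁ N₂ N : LagGr n} (h₁ : IsCompl L₁.val M.val) (h₂ : IsCompl L₂.val M.val)
    (e₁ : N₁.val = L₁.val.map A.toLinearMap) (e₂ : N₂.val = L₂.val.map A.toLinearMap)
    (e : N.val = M.val.map A.toLinearMap) :
    f N₁ N₂ N = f L₂ L₁ M := by
  set R : SympSpace n ≃ₗ[ℂ] SympSpace n :=
    LinearEquiv.ofInvolutive (swapMap h₁ h₂) (swapMap_involutive h₁ h₂)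
  have hR : R.toLinearMap = swapMap h₁ h₂ := rfl
  have hcomp : (R.trans A).toLinearMap = A.toLinearMap ∘ₗ swapMap h₁ h₂ := rfl
  refine hf.2.1 (R.trans A) (fun u v => ?_) _ _ _ _ _ _ ?_ ?_ ?_
  · have := swapMap_anti L₁.2 L₂.2 M.2 h₁ h₂ u v
    rw [LinearEquiv.trans_apply, LinearEquiv.trans_apply, hA]
    exact neg_eq_iff_eq_neg.2 this
  · rw [e₁, hcomp, Submodule.map_comp, swapMap_comm, swapMap_map_left]
  · rw [e₂, hcomp, Submodule.map_comp, swapMap_map_left]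
  · rw [e, hcomp, Submodule.map_comp, swapMap_map_right]

end Aux

/-- Anti-symplectic transformations reverse the order of the arguments:
`f(AL₁, AL₂, AL₃) = f(L₃, L₂, L₁)`. -/
theorem duistermaat_index_antisymplectic (n : ℕ) (hn : 1 ≤ n)
    (f : LagGr n → LagGr n → LagGr n → ℤ) (hf : SatisfiesDuiAxioms f)
    (A : SympSpace n ≃ₗ[ℂ] SympSpace n)
    (hA : ∀ u v, omegaForm (A u) (A v) = -omegaForm u v)
    (L₁ L₂ L₃ M₁ M₂ M₃ : LagGr n)
    (h₁ : M₁.val = (L₁.val).map A.toLinearMap)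
    (h₂ : M₂.val = (L₂.val).map A.toLinearMap)
    (h₃ : M₃.val = (L₃.val).map A.toLinearMap) :
    f M₁ M₂ M₃ = f L₃ L₂ L₁ := by
  obtain ⟨M, c₁, c₂, c₃⟩ := exists_common_compl L₁ L₂ L₃
  let N : LagGr n := ⟨M.val.map A.toLinearMap, M.2.map_anti A hA⟩
  have s₁₂ := index_swap hf A hA c₁ c₂ h₁ h₂ (N := N) rfl
  have s₁₃ := index_swap hf A hA c₁ c₃ h₁ h₃ (N := N) rfl
  have s₂₃ := index_swap hf A hA c₂ c₃ h₂ h₃ (N := N) rfl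
  have k := hf.2.2 M₁ M₂ M₃ N
  have k' := hf.2.2 L₃ L₂ L₁ M
  linarith
end

section
/- Let A and B be n×n Hermitian matrices with ker A ⊆ ker B. Then n_−(A − B) = n_−(A) − n_−(B) + n_−(B⁺ − P_B A⁺ P_B), where X⁺ denotes the Moore–Penrose pseudoinverse and P_B = B B⁺ is the orthogonal projector onto the range of B. -/
/-!
The identity comes from computing the negative index of the block form
`M = [[A, B], [B, B]]` on `ℂⁿ × ℂⁿ` in two ways. Completing the square in the second variable
makes `M` congruent to `(A - B) ⊕ B`. Since `ker A ⊆ ker B` gives `A A⁺ B = B`, completing the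
square in the first variable makes it congruent to `A ⊕ (B - B A⁺ B)`. The negative index is
additive on orthogonal direct sums and invariant under congruence, so
`n₋(A - B) + n₋(B) = n₋(A) + n₋(B - B A⁺ B)`. Finally `B - B A⁺ B = B (B⁺ - P A⁺ P) B` and
`B⁺ - P A⁺ P = B⁺ (B - B A⁺ B) B⁺`, so these two matrices have the same negative index
(`negIdxM_congr_le`).

The index is defined as the maximal dimension of a negative definite subspace, and additivity
needs an upper bound on such dimensions. It is obtained from a negative definite subspace
together with a nonnegative subspace of complementary dimension (`HasNegSplit`), which the
spectral theorem supplies for every Hermitian matrix.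
-/

open Matrix

/-- `Xp` is the Moore–Penrose pseudoinverse of `X`. -/
def IsMoorePenrose {n : ℕ} (X Xp : Matrix (Fin n) (Fin n) ℂ) : Prop :=
  X * Xp * X = X ∧ Xp * X * Xp = Xp ∧ (X * Xp)ᴴ = X * Xp ∧ (Xp * X)ᴴ = Xp * X

/-- A real-valued function `q` (meant to be a Hermitian quadratic form) on `V` is negative on the
nonzero vectors of a `d`-dimensional subspace and nonnegative on a subspace of dimension at least
`dim V - d`. -/
def HasNegSplit {V : Type*} [AddCommGroup V] [Module ℂ V] (q : V → ℝ) (d : ℕ) : Prop :=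
  ∃ W W' : Submodule ℂ V, Module.finrank ℂ W = d ∧
    Module.finrank ℂ V ≤ d + Module.finrank ℂ W' ∧
    (∀ x ∈ W, x ≠ 0 → q x < 0) ∧ ∀ x ∈ W', 0 ≤ q x

/-- A negative definite subspace meets the nonnegative subspace of a splitting trivially, so its
dimension is at most `d`. -/
lemma HasNegSplit.finrank_le {V : Type*} [AddCommGroup V] [Module ℂ V]
    [FiniteDimensional ℂ V] {q : V → ℝ} {d : ℕ} (h : HasNegSplit q d)
    (U : Submodule ℂ V) (hU : ∀ x ∈ U, x ≠ 0 → q x < 0) : Module.finrank ℂ U ≤ d := by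
  obtain ⟨W, W', -, hd, -, hW'⟩ := h
  have hdisj : Disjoint U W' := by
    rw [Submodule.disjoint_def]
    intro x hx hx'
    by_contra hne
    exact absurd (hU x hx hne) (not_lt.mpr (hW' x hx'))
  have := Submodule.finrank_add_finrank_le_of_disjoint hdisj
  omega

lemma HasNegSplit.unique {V : Type*} [AddCommGroup V] [Module ℂ V]
    [FiniteDimensional ℂ V] {q : V → ℝ} {d e : ℕ} (h : HasNegSplit q d)
    (h' : HasNegSplit q e) : d = e := by
  obtain ⟨W, _, hWd, _, hW, _⟩ := id h
  obtain ⟨U, _, hUe, _, hU, _⟩ := id h'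
  have h1 := h.finrank_le U hU
  have h2 := h'.finrank_le W hW
  omega

lemma HasNegSplit.formNegIdx_eq {V : Type*} [AddCommGroup V] [Module ℂ V]
    [FiniteDimensional ℂ V] {Q : V → V → ℂ} {d : ℕ}
    (h : HasNegSplit (fun x => (Q x x).re) d) : formNegIdx Q = d := by
  refine IsGreatest.csSup_eq ⟨?_, ?_⟩
  · obtain ⟨W, _, hWd, _, hW, _⟩ := h
    exact ⟨W, hWd, hW⟩
  · rintro e ⟨U, rfl, hU⟩
    exact h.finrank_le U hU

lemma HasNegSplit.comp_equiv {V V₂ : Type*} [AddCommGroup V] [Module ℂ V]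
    [AddCommGroup V₂] [Module ℂ V₂] {q : V → ℝ} {q₂ : V₂ → ℝ} {d : ℕ}
    (h : HasNegSplit q d) (e : V ≃ₗ[ℂ] V₂) (he : ∀ x, q₂ (e x) = q x) :
    HasNegSplit q₂ d := by
  obtain ⟨W, W', hd, hd', hW, hW'⟩ := h
  refine ⟨W.map e.toLinearMap, W'.map e.toLinearMap, ?_, ?_, ?_, ?_⟩
  · rw [← hd]; exact LinearEquiv.finrank_map_eq e W
  · rw [← e.finrank_eq]
    have : Module.finrank ℂ (W'.map e.toLinearMap) = _ := LinearEquiv.finrank_map_eq e W'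
    rwa [this]
  · rintro _ ⟨x, hx, rfl⟩ hne
    have : q₂ (e x) < 0 := by
      rw [he]
      exact hW x hx (by rintro rfl; simp at hne)
    exact this
  · rintro _ ⟨x, hx, rfl⟩
    have : 0 ≤ q₂ (e x) := by rw [he]; exact hW' x hx
    exact this

lemma finrank_submodule_prod {V V₂ : Type*} [AddCommGroup V] [Module ℂ V]
    [AddCommGroup V₂] [Module ℂ V₂] [FiniteDimensional ℂ V] [FiniteDimensional ℂ V₂]
    (W : Submodule ℂ V) (W₂ : Submodule ℂ V₂) :
    Module.finrank ℂ (W.prod W₂) = Module.finrank ℂ W + Module.finrank ℂ W₂ := by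
  rw [← Module.finrank_prod]
  refine LinearEquiv.finrank_eq (LinearEquiv.ofBijective
    ((W.subtype.prodMap W₂.subtype).codRestrict (W.prod W₂) fun p => ⟨p.1.2, p.2.2⟩)
    ⟨?_, ?_⟩).symm
  · rintro ⟨a, b⟩ ⟨c, d⟩ h
    have h' : ((a : V), (b : V₂)) = ((c : V), (d : V₂)) := congrArg Subtype.val h
    exact Prod.ext (Subtype.ext (congrArg Prod.fst h')) (Subtype.ext (congrArg Prod.snd h'))
  · rintro ⟨⟨a, b⟩, ha, hb⟩
    exact ⟨(⟨a, ha⟩, ⟨b, hb⟩), rfl⟩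

lemma HasNegSplit.prod {V V₂ : Type*} [AddCommGroup V] [Module ℂ V]
    [AddCommGroup V₂] [Module ℂ V₂] [FiniteDimensional ℂ V] [FiniteDimensional ℂ V₂]
    {q : V → ℝ} {q₂ : V₂ → ℝ} {d d₂ : ℕ}
    (hq : q 0 = 0) (hq₂ : q₂ 0 = 0)
    (h : HasNegSplit q d) (h₂ : HasNegSplit q₂ d₂) :
    HasNegSplit (fun p : V × V₂ => q p.1 + q₂ p.2) (d + d₂) := by
  obtain ⟨W, W', hd, hd', hW, hW'⟩ := h
  obtain ⟨U, U', he, he', hU, hU'⟩ := h₂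
  refine ⟨W.prod U, W'.prod U', ?_, ?_, ?_, ?_⟩
  · rw [finrank_submodule_prod, hd, he]
  · rw [finrank_submodule_prod, Module.finrank_prod]; omega
  · rintro ⟨x, y⟩ ⟨hx, hy⟩ hne
    change q x + q₂ y < 0
    by_cases hx0 : x = 0
    · have hy0 : y ≠ 0 := by rintro rfl; exact hne (by simp [hx0])
      have := hU y hy hy0
      rw [hx0, hq]; linarith
    · have h1 := hW x hx hx0
      by_cases hy0 : y = 0
      · rw [hy0, hq₂]; linarith
      · have := hU y hy hy0
        linarith
  · rintro ⟨x, y⟩ ⟨hx, hy⟩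
    exact add_nonneg (hW' x hx) (hU' y hy)

/-- The quadratic form of a matrix, with the real part taken. -/
def qf {n : ℕ} (A : Matrix (Fin n) (Fin n) ℂ) (x : Fin n → ℂ) : ℝ :=
  (star x ⬝ᵥ A *ᵥ x).re

lemma qf_zero {n : ℕ} (A : Matrix (Fin n) (Fin n) ℂ) : qf A 0 = 0 := by simp [qf]

lemma qf_congr {n : ℕ} (A C : Matrix (Fin n) (Fin n) ℂ) (x : Fin n → ℂ) :
    qf (Cᴴ * A * C) x = qf A (C *ᵥ x) := by
  simp only [qf, star_mulVec, ← mulVec_mulVec, dotProduct_mulVec, vecMul_vecMul]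

lemma qf_diagonal {n : ℕ} (l : Fin n → ℝ) (x : Fin n → ℂ) :
    qf (diagonal fun i => (l i : ℂ)) x = ∑ i, l i * Complex.normSq (x i) := by
  simp only [qf, dotProduct, mulVec_diagonal, Complex.re_sum, Pi.star_apply]
  refine Finset.sum_congr rfl fun i _ => ?_
  simp [Complex.normSq_apply]
  ring

/-- The coordinate projection onto the negative entries has the negative definite subspace as
range and the nonnegative one as kernel. -/
lemma hasNegSplit_diagonal {n : ℕ} (l : Fin n → ℝ) :
    ∃ d, HasNegSplit (qf (diagonal fun i => (l i : ℂ))) d := by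
  set f : (Fin n → ℂ) →ₗ[ℂ] (Fin n → ℂ) :=
    (diagonal fun i => if l i < 0 then (1 : ℂ) else 0).mulVecLin with hf
  refine ⟨_, LinearMap.range f, LinearMap.ker f, rfl,
    (LinearMap.finrank_range_add_finrank_ker f).ge, ?_, ?_⟩
  · rintro _ ⟨x, rfl⟩ hne
    rw [qf_diagonal]
    obtain ⟨i, hi⟩ := Function.ne_iff.mp hne
    have hterm : ∀ j, f x j = (if l j < 0 then (1 : ℂ) else 0) * x j := fun j => by
      simp [hf, mulVec_diagonal]
    refine Finset.sum_neg' (fun j _ => ?_) ⟨i, Finset.mem_univ i, ?_⟩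
    · rw [hterm]
      split_ifs with hj
      · exact mul_nonpos_of_nonpos_of_nonneg hj.le (Complex.normSq_nonneg _)
      · simp
    · have hli : l i < 0 := by
        by_contra hc
        exact hi (by rw [hterm]; simp [hc])
      exact mul_neg_of_neg_of_pos hli (Complex.normSq_pos.mpr hi)
  · intro x hx
    rw [qf_diagonal]
    refine Finset.sum_nonneg fun j _ => ?_
    have hj : (if l j < 0 then (1 : ℂ) else 0) * x j = 0 := by
      have := congrFun (LinearMap.mem_ker.mp hx) j
      simpa [hf, mulVec_diagonal] using this
    by_cases hlj : l j < 0
    · have : x j = 0 := by simpa [hlj] using hj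
      simp [this]
    · exact mul_nonneg (not_lt.mp hlj) (Complex.normSq_nonneg _)

lemma hasNegSplit_of_isHermitian {n : ℕ} {A : Matrix (Fin n) (Fin n) ℂ}
    (hA : A.IsHermitian) : HasNegSplit (qf A) (negIdxM A) := by
  obtain ⟨d, hd⟩ := hasNegSplit_diagonal hA.eigenvalues
  obtain ⟨U, h1, h2, h'⟩ : ∃ U : Matrix (Fin n) (Fin n) ℂ, U * Uᴴ = 1 ∧ Uᴴ * U = 1 ∧
      A = U * (diagonal fun i => (hA.eigenvalues i : ℂ)) * Uᴴ := by
    refine ⟨hA.eigenvectorUnitary, Unitary.mul_star_self_of_mem hA.eigenvectorUnitary.2,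
      Unitary.star_mul_self_of_mem hA.eigenvectorUnitary.2, ?_⟩
    have h := hA.spectral_theorem
    rw [Unitary.conjStarAlgAut_apply] at h
    exact h
  have hdiag : Uᴴ * A * U = diagonal fun i => (hA.eigenvalues i : ℂ) := by
    calc Uᴴ * A * U = Uᴴ * (U * (diagonal fun i => (hA.eigenvalues i : ℂ)) * Uᴴ) * U := by
          rw [← h']
      _ = (Uᴴ * U) * (diagonal fun i => (hA.eigenvalues i : ℂ)) * (Uᴴ * U) := by
          simp only [Matrix.mul_assoc]
      _ = _ := by rw [h2]; simp
  have hs : HasNegSplit (qf A) d := by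
    refine hd.comp_equiv (Matrix.toLin'OfInv h2 h1) fun x => ?_
    have hx : Matrix.toLin'OfInv h2 h1 x = U *ᵥ x := Matrix.toLin'_apply U x
    rw [← hdiag, qf_congr, hx]
  have : negIdxM A = d := HasNegSplit.formNegIdx_eq hs
  rwa [this]

/-- Congruence by an arbitrary, possibly singular, matrix does not increase the negative index:
`C` is injective on a negative definite subspace of `Cᴴ M C` and maps it to one of `M`. -/
lemma negIdxM_congr_le {n : ℕ} (M C : Matrix (Fin n) (Fin n) ℂ) :
    negIdxM (Cᴴ * M * C) ≤ negIdxM M := by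
  refine csSup_le_csSup ?_ ⟨0, ⊥, by simp, by simp⟩ ?_
  · refine ⟨n, ?_⟩
    rintro _ ⟨W, rfl, -⟩
    simpa using Submodule.finrank_le W
  · rintro _ ⟨W, rfl, hW⟩
    have hneg : ∀ x ∈ W, x ≠ 0 → qf M (C *ᵥ x) < 0 := fun x hx hne => by
      rw [← qf_congr]; exact hW x hx hne
    refine ⟨W.map C.mulVecLin, ?_, ?_⟩
    · have hinj : Function.Injective (C.mulVecLin.domRestrict W) := by
        rw [← LinearMap.ker_eq_bot, LinearMap.ker_eq_bot']
        rintro ⟨x, hx⟩ hx0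
        by_contra hne
        have h0 : C *ᵥ x = 0 := hx0
        have := hneg x hx (fun h => hne (by simp [h]))
        rw [h0, qf_zero] at this
        exact lt_irrefl _ this
      have := LinearMap.finrank_range_of_inj hinj
      rwa [LinearMap.range_domRestrict] at this
    · rintro _ ⟨x, hx, rfl⟩ hne
      exact hneg x hx (by rintro rfl; simp at hne)

lemma IsMoorePenrose.eq {n : ℕ} {X Y Z : Matrix (Fin n) (Fin n) ℂ}
    (hY : IsMoorePenrose X Y) (hZ : IsMoorePenrose X Z) : Y = Z := by
  obtain ⟨y1, y2, y3, y4⟩ := hY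
  obtain ⟨z1, z2, z3, z4⟩ := hZ
  have e1 : X * Y = X * Z := by
    have h : X * Z * (X * Y) = X * Y := by rw [← Matrix.mul_assoc, z1]
    have h' : X * Y * (X * Z) = X * Z := by rw [← Matrix.mul_assoc, y1]
    rw [← y3, ← h, conjTranspose_mul, y3, z3, h']
  have e2 : Y * X = Z * X := by
    have h : Y * X * (Z * X) = Y * X := by
      rw [Matrix.mul_assoc, ← Matrix.mul_assoc X, z1]
    have h' : Z * X * (Y * X) = Z * X := by
      rw [Matrix.mul_assoc, ← Matrix.mul_assoc X, y1]
    rw [← y4, ← h, conjTranspose_mul, y4, z4, h']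
  rw [← y2, e2, Matrix.mul_assoc, e1, ← Matrix.mul_assoc, z2]

lemma IsMoorePenrose.isHermitian {n : ℕ} {X Y : Matrix (Fin n) (Fin n) ℂ}
    (hX : X.IsHermitian) (hY : IsMoorePenrose X Y) : Y.IsHermitian := by
  refine IsMoorePenrose.eq (X := X) ?_ hY
  obtain ⟨y1, y2, y3, y4⟩ := hY
  have hX' : Xᴴ = X := hX
  have e1 : X * Yᴴ = Y * X := by rw [← y4, conjTranspose_mul, hX']
  have e2 : Yᴴ * X = X * Y := by rw [← y3, conjTranspose_mul, hX']
  refine ⟨?_, ?_, ?_, ?_⟩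
  · rw [Matrix.mul_assoc, e2, ← Matrix.mul_assoc]
    have := congrArg conjTranspose y1
    simpa [conjTranspose_mul, hX', e2, Matrix.mul_assoc] using this
  · have := congrArg conjTranspose y2
    simpa [conjTranspose_mul, hX', Matrix.mul_assoc] using this
  · rw [e1, y4]
  · rw [e2, y3]

/-- The linear change of variables `(u, y) ↦ (u - C y, u - C y + y)`, the composite of the two
shears that complete the square in the first and in the second variable. -/
def shearEquiv {n : ℕ} (C : Matrix (Fin n) (Fin n) ℂ) :
    ((Fin n → ℂ) × (Fin n → ℂ)) ≃ₗ[ℂ] ((Fin n → ℂ) × (Fin n → ℂ)) where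
  toFun p := (p.1 - C *ᵥ p.2, p.1 - C *ᵥ p.2 + p.2)
  invFun p := (p.1 + C *ᵥ (p.2 - p.1), p.2 - p.1)
  map_add' p r := by
    ext i <;> simp [mulVec_add] <;> ring
  map_smul' c p := by
    ext i <;> simp [mulVec_smul] <;> ring
  left_inv p := by ext i <;> simp
  right_inv p := by ext i <;> simp

/-- Both sides are the value of the block form `[[A, B], [B, B]]`, the square being completed in
the second variable on the left and in the first variable on the right. -/
lemma qf_shear {n : ℕ} {A B Ap : Matrix (Fin n) (Fin n) ℂ} (hB : B.IsHermitian)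
    (hAp : Ap.IsHermitian) (h1 : A * Ap * B = B) (h2 : B * Ap * A = B) (u y : Fin n → ℂ) :
    qf (A - B) (u - (Ap * B) *ᵥ y) + qf B (u - (Ap * B) *ᵥ y + y)
      = qf A u + qf (B - B * Ap * B) y := by
  have hC : (Ap * B)ᴴ = B * Ap := by rw [conjTranspose_mul, hAp.eq, hB.eq]
  have e1 : A *ᵥ ((Ap * B) *ᵥ y) = B *ᵥ y := by
    rw [mulVec_mulVec, ← Matrix.mul_assoc, h1]
  have e2 : star ((Ap * B) *ᵥ y) ⬝ᵥ A *ᵥ u = star y ⬝ᵥ B *ᵥ u := by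
    rw [star_mulVec, hC, dotProduct_mulVec, vecMul_vecMul, h2, ← dotProduct_mulVec]
  have e3 : star ((Ap * B) *ᵥ y) ⬝ᵥ B *ᵥ y = star y ⬝ᵥ (B * Ap * B) *ᵥ y := by
    rw [star_mulVec, hC, dotProduct_mulVec, vecMul_vecMul, ← dotProduct_mulVec]
  have e4 : star y ⬝ᵥ B *ᵥ ((Ap * B) *ᵥ y) = star y ⬝ᵥ (B * Ap * B) *ᵥ y := by
    rw [mulVec_mulVec, ← Matrix.mul_assoc]
  simp only [qf, ← Complex.add_re]
  congr 1
  simp only [sub_mulVec, mulVec_sub, mulVec_add, star_sub, star_add, sub_dotProduct,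
    dotProduct_sub, add_dotProduct, dotProduct_add, e1, e2, e3, e4]
  ring

/-- If `ker A ⊆ ker B` then
`n₋(A − B) = n₋(A) − n₋(B) + n₋(B⁺ − P_B A⁺ P_B)`, with `P_B = B B⁺`. -/
theorem morse_index_difference_kerA_subset (n : ℕ)
    (A B Ap Bp : Matrix (Fin n) (Fin n) ℂ)
    (hA : A.IsHermitian) (hB : B.IsHermitian)
    (hker : LinearMap.ker A.mulVecLin ≤ LinearMap.ker B.mulVecLin)
    (hAp : IsMoorePenrose A Ap) (hBp : IsMoorePenrose B Bp) :
    (negIdxM (A - B) : ℤ)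
      = (negIdxM A : ℤ) - negIdxM B + negIdxM (Bp - (B * Bp) * Ap * (B * Bp)) := by
  have hApH := hAp.isHermitian hA
  have hBpH := hBp.isHermitian hB
  -- `A (1 - A⁺ A) = 0`, so the kernel inclusion gives `B (1 - A⁺ A) = 0`.
  have h2 : B * Ap * A = B := by
    refine Matrix.ext_of_mulVec_single fun i => ?_
    set x : Fin n → ℂ := Pi.single i 1
    have hx : (Ap * A) *ᵥ x - x ∈ LinearMap.ker A.mulVecLin := by
      rw [LinearMap.mem_ker, mulVecLin_apply, mulVec_sub, mulVec_mulVec, ← Matrix.mul_assoc,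
        hAp.1, sub_self]
    have hx' := hker hx
    rw [LinearMap.mem_ker, mulVecLin_apply, mulVec_sub, mulVec_mulVec, ← Matrix.mul_assoc] at hx'
    exact sub_eq_zero.mp hx'
  have h1 : A * Ap * B = B := by
    have := congrArg conjTranspose h2
    simpa [conjTranspose_mul, hA.eq, hB.eq, hApH.eq, Matrix.mul_assoc] using this
  have hS : (B - B * Ap * B).IsHermitian := by
    refine hB.sub ?_
    have := isHermitian_conjTranspose_mul_mul B hApH
    rwa [hB.eq] at this
  have hsum : negIdxM (A - B) + negIdxM B = negIdxM A + negIdxM (B - B * Ap * B) := by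
    have s1 := (hasNegSplit_of_isHermitian (hA.sub hB)).prod (qf_zero _) (qf_zero _)
      (hasNegSplit_of_isHermitian hB)
    have s2 := (hasNegSplit_of_isHermitian hA).prod (qf_zero _) (qf_zero _)
      (hasNegSplit_of_isHermitian hS)
    exact s1.unique (s2.comp_equiv (shearEquiv (Ap * B)) fun p =>
      qf_shear hB hApH h1 h2 p.1 p.2)
  have hcomm : Bp * B = B * Bp := by
    rw [← hBp.2.2.1, conjTranspose_mul, hB.eq, hBpH.eq]
  have hPB : B * Bp * B = B := hBp.1
  have hBP : B * (B * Bp) = B := by rw [← hcomm, ← Matrix.mul_assoc, hPB]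
  have c1 : Bᴴ * (Bp - (B * Bp) * Ap * (B * Bp)) * B = B - B * Ap * B := by
    rw [hB.eq, Matrix.mul_sub, Matrix.sub_mul, hPB]
    congr 1
    calc B * (B * Bp * Ap * (B * Bp)) * B = (B * (B * Bp)) * Ap * (B * Bp * B) := by
          simp only [Matrix.mul_assoc]
      _ = _ := by rw [hBP, hPB]
  have c2 : Bpᴴ * (B - B * Ap * B) * Bp = Bp - (B * Bp) * Ap * (B * Bp) := by
    rw [hBpH.eq, Matrix.mul_sub, Matrix.sub_mul, hBp.2.1]
    congr 1
    calc Bp * (B * Ap * B) * Bp = (Bp * B) * Ap * (B * Bp) := by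
          simp only [Matrix.mul_assoc]
      _ = _ := by rw [hcomm]
  have hcongr : negIdxM (B - B * Ap * B) = negIdxM (Bp - (B * Bp) * Ap * (B * Bp)) := by
    apply le_antisymm
    · rw [← c1]; exact negIdxM_congr_le _ _
    · conv_lhs => rw [← c2]
      exact negIdxM_congr_le _ _
  rw [← hcongr]
  omega
end
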